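/- Let p, m be natural numbers and let A ∈ ℂ^{p×p}, B, C ∈ ℂ^{p×m}, D ∈ ℂ^{m×m} be constant matrices such that det(z·A − A^H) ≠ 0 in ℂ(z). Define H := (z·D − D^H) + (z·B^H − C^H)·(z·A − A^H)⁻¹·(z·C − B) ∈ ℂ(z)^{m×m} (the transfer function of the *-anti-palindromic linear system matrix L(z) = z·[[−A, C],[B^H, D]] − [[−A^H, B],[C^H, D^H]]). Then z·H^*(z⁻¹) = −H, i.e. for all i, j, multiplying by z the substitution of z⁻¹ into conj(H_{ji}) yields −H_{ij}. -/

import Mathlib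

open Polynomial Matrix

set_option synthInstance.maxHeartbeats 1000000
set_option maxHeartbeats 1000000

noncomputable section

/-- Coefficientwise complex conjugation on rational functions. -/
def conjRF : RatFunc ℂ →+* RatFunc ℂ :=
  RatFunc.mapRingHom (Polynomial.mapRingHom (starRingEnd ℂ))
    (by
      intro x hx
      simp only [Submonoid.mem_comap, mem_nonZeroDivisors_iff_ne_zero] at *
      intro h
      exact hx (Polynomial.map_injective _ (starRingEnd ℂ).injective (by simpa using h)))

/-- Substitution of `g` for the variable in `f`. -/
def subst (g f : RatFunc ℂ) : RatFunc ℂ := RatFunc.eval (algebraMap ℂ (RatFunc ℂ)) g f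

/-- Constant complex matrices regarded as matrices over `ℂ(z)`. -/
def toRF {n o : Type*} (A : Matrix n o ℂ) : Matrix n o (RatFunc ℂ) :=
  A.map (algebraMap ℂ (RatFunc ℂ))

/-- The para-conjugate `R^*(1/z)`. -/
def paraConj {n : Type*} (R : Matrix n n (RatFunc ℂ)) : Matrix n n (RatFunc ℂ) :=
  fun i j => subst (RatFunc.X)⁻¹ (conjRF (R j i))

def IsParaHermitian {n : Type*} (R : Matrix n n (RatFunc ℂ)) : Prop := paraConj R = R

def IsParaSkewHermitian {n : Type*} (R : Matrix n n (RatFunc ℂ)) : Prop := paraConj R = -R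

/-- The variable `z` of `ℂ(z)`. -/
def zz : RatFunc ℂ := RatFunc.X

/-!
Para-conjugation `f ↦ f^*(1/z)` is an involutive automorphism of `ℂ(z)`. With it as the star
operation, `R^*(1/z)` is the conjugate transpose of `R`, the matrix `toRF Aᴴ` is the conjugate
transpose of `toRF A`, and `z` is unitary. Every pencil then satisfies
`z • (z • P - Qᴴ)ᴴ = -(z • Q - Pᴴ)`, so the four pencils entering `H` are exchanged by
`M ↦ -z • Mᴴ`, and this symmetry passes to the Schur complement `H`.
-/

section StarRing

variable {R m n : Type*} [CommRing R] [StarRing R] {z : R}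

theorem smul_conjTranspose_pencil (hz : z ∈ unitary R) (P : Matrix m n R) (Q : Matrix n m R) :
    z • (z • P - Qᴴ)ᴴ = -(z • Q - Pᴴ) := by
  rw [conjTranspose_sub, conjTranspose_smul, conjTranspose_conjTranspose, smul_sub, smul_smul,
    Unitary.mul_star_self_of_mem hz, one_smul, neg_sub]

variable [Fintype n] [DecidableEq n]

theorem conjTranspose_inv_eq_neg_smul {P : Matrix n n R} (hdet : IsUnit P.det) (hP : z • Pᴴ = -P) :
    P⁻¹ᴴ = -(z • P⁻¹) := by
  rw [conjTranspose_nonsing_inv]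
  refine inv_eq_left_inv ?_
  rw [neg_mul, Matrix.smul_mul, ← Matrix.mul_smul, hP, mul_neg, neg_neg, nonsing_inv_mul _ hdet]

theorem smul_conjTranspose_schur {P : Matrix n n R} {Q : Matrix n m R} {S : Matrix m n R}
    {T : Matrix m m R} (hdet : IsUnit P.det) (hP : z • Pᴴ = -P) (hQ : z • Qᴴ = -S)
    (hS : z • Sᴴ = -Q) (hT : z • Tᴴ = -T) :
    z • (T + S * P⁻¹ * Q)ᴴ = -(T + S * P⁻¹ * Q) := by
  have hSPQ : z • (S * P⁻¹ * Q)ᴴ = -(S * P⁻¹ * Q) :=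
    calc z • (S * P⁻¹ * Q)ᴴ
      _ = (z • Qᴴ) * (P⁻¹ᴴ * Sᴴ) := by rw [conjTranspose_mul, conjTranspose_mul, Matrix.smul_mul]
      _ = S * P⁻¹ * (z • Sᴴ) := by
        rw [hQ, conjTranspose_inv_eq_neg_smul hdet hP, Matrix.neg_mul, Matrix.neg_mul,
          Matrix.mul_neg, neg_neg, Matrix.smul_mul, Matrix.mul_smul, Matrix.mul_smul,
          Matrix.mul_assoc]
      _ = -(S * P⁻¹ * Q) := by rw [hS, Matrix.mul_neg]
  rw [conjTranspose_add, smul_add, hT, hSPQ, neg_add]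

theorem antipalindromic_transfer_rev_one_general (hz : z ∈ unitary R) {A : Matrix n n R}
    (B C : Matrix n m R) (D : Matrix m m R) (hdet : IsUnit (z • A - Aᴴ).det) :
    z • ((z • D - Dᴴ) + (z • Bᴴ - Cᴴ) * (z • A - Aᴴ)⁻¹ * (z • C - B))ᴴ =
      -((z • D - Dᴴ) + (z • Bᴴ - Cᴴ) * (z • A - Aᴴ)⁻¹ * (z • C - B)) := by
  have hCB : z • (z • C - B)ᴴ = -(z • Bᴴ - Cᴴ) := by
    simpa only [conjTranspose_conjTranspose] using smul_conjTranspose_pencil hz C Bᴴ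
  have hBC : z • (z • Bᴴ - Cᴴ)ᴴ = -(z • C - B) := by
    simpa only [conjTranspose_conjTranspose] using smul_conjTranspose_pencil hz Bᴴ C
  exact smul_conjTranspose_schur hdet (smul_conjTranspose_pencil hz A A) hCB hBC
    (smul_conjTranspose_pencil hz D D)

end StarRing

theorem ratFunc_ringHom_ext {K L : Type*} [Field K] [Semiring L] {φ ψ : RatFunc K →+* L}
    (hC : ∀ c, φ (RatFunc.C c) = ψ (RatFunc.C c)) (hX : φ RatFunc.X = ψ RatFunc.X) : φ = ψ := by
  refine IsLocalization.ringHom_ext (nonZeroDivisors K[X]) (Polynomial.ringHom_ext ?_ ?_)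
  · simpa using hC
  · simpa using hX

theorem transcendental_zz_inv : Transcendental ℂ zz⁻¹ :=
  fun h ↦ RatFunc.transcendental_X (IsAlgebraic.inv_iff.mp h)

theorem eval₂_denom_ne_zero_of_transcendental {K L : Type*} [Field K] [Ring L] [Algebra K L] {a : L}
    (ha : Transcendental K a) (f : RatFunc K) : f.denom.eval₂ (algebraMap K L) a ≠ 0 :=
  fun h ↦ ha ⟨f.denom, f.denom_ne_zero, h⟩

/-- Substitution of a transcendental `g` for the variable, as a ring endomorphism of `ℂ(z)`. For
algebraic (that is, constant) `g`, `subst g` is not additive, because `RatFunc.eval` takes the value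
`0` at a pole. -/
def substHom {g : RatFunc ℂ} (hg : Transcendental ℂ g) : RatFunc ℂ →+* RatFunc ℂ where
  toFun := subst g
  map_one' := RatFunc.eval_one _ _
  map_zero' := RatFunc.eval_zero _ _
  map_mul' f₁ f₂ := RatFunc.eval_mul _ _ (eval₂_denom_ne_zero_of_transcendental hg f₁)
    (eval₂_denom_ne_zero_of_transcendental hg f₂)
  map_add' f₁ f₂ := RatFunc.eval_add _ _ (eval₂_denom_ne_zero_of_transcendental hg f₁)
    (eval₂_denom_ne_zero_of_transcendental hg f₂)

theorem conjRF_algebraMap (q : ℂ[X]) :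
    conjRF (algebraMap ℂ[X] (RatFunc ℂ) q) =
      algebraMap ℂ[X] (RatFunc ℂ) (q.map (starRingEnd ℂ)) := by
  simp [conjRF, RatFunc.coe_mapRingHom_eq_coe_map, RatFunc.map_apply]

/-- Para-conjugation `f ↦ f^*(1/z)` of scalar rational functions. -/
def paraConjHom : RatFunc ℂ →+* RatFunc ℂ := (substHom transcendental_zz_inv).comp conjRF

theorem paraConjHom_C (c : ℂ) : paraConjHom (RatFunc.C c) = RatFunc.C (star c) := by
  change subst zz⁻¹ (conjRF _) = _
  rw [← RatFunc.algebraMap_C, conjRF_algebraMap]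
  simp [subst]

theorem paraConjHom_zz : paraConjHom zz = zz⁻¹ := by
  change subst zz⁻¹ (conjRF _) = _
  rw [zz, ← RatFunc.algebraMap_X, conjRF_algebraMap]
  simp [subst]

theorem paraConjHom_involutive : Function.Involutive paraConjHom := by
  suffices paraConjHom.comp paraConjHom = RingHom.id _ from RingHom.congr_fun this
  refine ratFunc_ringHom_ext (fun c ↦ ?_) ?_
  · simp [paraConjHom_C]
  · change paraConjHom (paraConjHom zz) = zz
    rw [paraConjHom_zz, map_inv₀, paraConjHom_zz, inv_inv]

/-- Para-conjugation as the star operation of `ℂ(z)`; the conjugate transpose of a matrix over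
`ℂ(z)` is then its para-conjugate `paraConj`. -/
local instance paraConjStarRing : StarRing (RatFunc ℂ) where
  star := paraConjHom
  star_involutive := paraConjHom_involutive
  star_mul f g := by rw [map_mul, mul_comm]
  star_add := map_add paraConjHom

theorem zz_mem_unitary : zz ∈ unitary (RatFunc ℂ) := by
  refine (IsUnit.mk0 zz RatFunc.X_ne_zero).mem_unitary_iff_mul_star_self.mpr ?_
  change zz * paraConjHom zz = 1
  rw [paraConjHom_zz, mul_inv_cancel₀ RatFunc.X_ne_zero]

theorem toRF_conjTranspose {m n : Type*} (A : Matrix m n ℂ) : toRF Aᴴ = (toRF A)ᴴ :=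
  conjTranspose_map _ fun c ↦ (paraConjHom_C c).symm

/-- the transfer function `H` of a `*`-anti-palindromic linear system matrix
satisfies `z · H^*(1/z) = -H`. -/
theorem antipalindromic_transfer_rev_one (p m : ℕ)
    (A : Matrix (Fin p) (Fin p) ℂ) (B C : Matrix (Fin p) (Fin m) ℂ)
    (D : Matrix (Fin m) (Fin m) ℂ)
    (hdet : (zz • toRF A - toRF Aᴴ).det ≠ 0)
    (H : Matrix (Fin m) (Fin m) (RatFunc ℂ))
    (hH : H = (zz • toRF D - toRF Dᴴ) +
      (zz • toRF Bᴴ - toRF Cᴴ) * (zz • toRF A - toRF Aᴴ)⁻¹ *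
      (zz • toRF C - toRF B)) :
    ∀ i j, zz * subst zz⁻¹ (conjRF (H j i)) = -(H i j) := by
  simp only [toRF_conjTranspose] at hdet hH
  exact hH ▸ congr_fun₂ (antipalindromic_transfer_rev_one_general zz_mem_unitary _ _ _ hdet.isUnit)
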